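/- There exist constants C > 0 and s₁ ≥ 1, depending only on d and T, such that for all s ≥ s₁, λ ≥ s₁ and every admissible function u: ∫_Q { (1/(sφ))(|∂_t u|² + |Δu|²) + λ|∇u|² + sλ²φ|u|² } e^{2sφ} dx dt + ∫_{ℝ^d} ( sλ|u(x,0)|² + |∇u(x,0)|² ) e^{2s} dx ≤ C ∫_Q |∂_t u + Δ u|² e^{2sφ} dx dt + C ∫_{ℝ^d} ( sλφ(T)|u(x,T)|² + |∇u(x,T)|² ) e^{2sφ(T)} dx. -/

import Mathlib

open MeasureTheory Real Set

noncomputable section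

/-- Spatial partial derivative of `f` in the `i`-th coordinate direction. -/
def spd {d : ℕ} (i : Fin d) (f : (Fin d → ℝ) → ℝ) (x : Fin d → ℝ) : ℝ :=
  fderiv ℝ f x (Pi.single i 1)

/-- Time derivative `∂_t u`. -/
def tder {d : ℕ} (u : (Fin d → ℝ) → ℝ → ℝ) (x : Fin d → ℝ) (t : ℝ) : ℝ :=
  deriv (u x) t

/-- Squared norm of the spatial gradient, `|∇u|²`. -/
def grad2 {d : ℕ} (u : (Fin d → ℝ) → ℝ → ℝ) (x : Fin d → ℝ) (t : ℝ) : ℝ :=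
  ∑ i : Fin d, (spd i (fun y => u y t) x) ^ 2

/-- Norm of the spatial gradient, `|∇u|`. -/
def gradNorm {d : ℕ} (u : (Fin d → ℝ) → ℝ → ℝ) (x : Fin d → ℝ) (t : ℝ) : ℝ :=
  Real.sqrt (grad2 u x t)

/-- Second spatial partial derivative `∂_i ∂_j u`. -/
def pdij {d : ℕ} (i j : Fin d) (u : (Fin d → ℝ) → ℝ → ℝ) (x : Fin d → ℝ) (t : ℝ) : ℝ :=
  spd i (fun y => spd j (fun z => u z t) y) x

/-- Spatial Laplacian `Δu`. -/
def lap {d : ℕ} (u : (Fin d → ℝ) → ℝ → ℝ) (x : Fin d → ℝ) (t : ℝ) : ℝ :=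
  ∑ i : Fin d, pdij i i u x t

/-- `Σ_{i,j=1}^d |∂_i∂_j u|²`. -/
def hess2 {d : ℕ} (u : (Fin d → ℝ) → ℝ → ℝ) (x : Fin d → ℝ) (t : ℝ) : ℝ :=
  ∑ i : Fin d, ∑ j : Fin d, (pdij i j u x t) ^ 2

/-- `u : ℝ^d × ℝ → ℝ` is admissible: `C^∞` and spatially compactly supported,
uniformly for `t ∈ [0,T]`. -/
def Admissible {d : ℕ} (T : ℝ) (u : (Fin d → ℝ) → ℝ → ℝ) : Prop :=
  ContDiff ℝ (⊤ : ℕ∞) (fun p : (Fin d → ℝ) × ℝ => u p.1 p.2) ∧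
  ∃ K₀ : Set (Fin d → ℝ), IsCompact K₀ ∧
    ∀ x t, x ∉ K₀ → t ∈ Set.Icc (0 : ℝ) T → u x t = 0

end

/-!
Conjugation by `e^ψ`, where `ψ = sφ`, turns `∂_t + Δ` into `∂_t + A` with `A = Δ - ψ'`, and each
`A(t)` is symmetric with `∂_t A = -ψ''`. For `v = e^ψ u` the cross term of `‖∂_t v + A v‖²` is
therefore a time derivative up to the lower-order term `ψ'' ‖v‖²`:
`‖∂_t v + A v‖² = ‖∂_t v‖² + ‖A v‖² + ψ'' ‖v‖² - d/dt ⟪-A v, v⟫`,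
where `⟪-A v, v⟫ = ∫ (|∇u|² + ψ' u²) e^{2ψ}` is an energy. The first three terms on the right
control the weighted norms of `∂_t u`, `Δu`, `∇u` and `u`, and integrating in time leaves only the
energies at the two ends.
-/

open Function (uncurry)
open scoped Topology

section ParametricIntegral

variable {X E : Type*} [TopologicalSpace X] [MeasurableSpace X] [OpensMeasurableSpace X]
  {μ : Measure X} [IsFiniteMeasureOnCompacts μ]
  [NormedAddCommGroup E] [NormedSpace ℝ E] {K : Set X} {I : Set ℝ}
  {F F' : X → ℝ → E} {t : ℝ}

theorem continuousOn_integral_of_eq_zero_of_notMem (hK : IsCompact K) (hF : Continuous (uncurry F))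
    (hzero : ∀ x ∉ K, ∀ t ∈ I, F x t = 0) : ContinuousOn (fun t => ∫ x, F x t ∂μ) I :=
  continuousOn_integral_of_compact_support hK (hF.comp continuous_swap).continuousOn
    fun t x ht hx => hzero x hx t ht

variable [T2Space X]

theorem hasDerivAt_setIntegral_of_isCompact (hK : IsCompact K) (hF : Continuous (uncurry F))
    (hF' : Continuous (uncurry F')) (hderiv : ∀ x t, HasDerivAt (F x) (F' x t) t) :
    HasDerivAt (fun t => ∫ x in K, F x t ∂μ) (∫ x in K, F' x t ∂μ) t := by
  have integrable_slice {G : X → ℝ → E} (hG : Continuous (uncurry G)) (τ : ℝ) :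
      IntegrableOn (G · τ) K μ :=
    (hG.comp (.prodMk_left τ)).continuousOn.integrableOn_compact hK
  obtain ⟨M, hM⟩ := (hK.prod (isCompact_Icc (a := t - 1) (b := t + 1))).exists_bound_of_continuousOn
    hF'.continuousOn
  refine (hasDerivAt_integral_of_dominated_loc_of_deriv_le (bound := fun _ => M)
    (Icc_mem_nhds (sub_one_lt t) (lt_add_one t))
    (.of_forall fun τ => (integrable_slice hF τ).aestronglyMeasurable) (integrable_slice hF t)
    (integrable_slice hF' t).aestronglyMeasurable ?_ (integrableOn_const hK.measure_ne_top)
    (.of_forall fun x τ _ => hderiv x τ)).2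
  filter_upwards [ae_restrict_mem hK.measurableSet] with x hx τ hτ using hM (x, τ) ⟨hx, hτ⟩

theorem hasDerivAt_integral_of_eq_zero_of_notMem (hK : IsCompact K) (hF : Continuous (uncurry F))
    (hF' : Continuous (uncurry F')) (hderiv : ∀ x t, HasDerivAt (F x) (F' x t) t) (hI : I ∈ 𝓝 t)
    (hzero : ∀ x ∉ K, ∀ τ ∈ I, F x τ = 0) :
    HasDerivAt (fun t => ∫ x, F x t ∂μ) (∫ x, F' x t ∂μ) t := by
  have deriv_eq_zero : ∀ x ∉ K, F' x t = 0 := fun x hx =>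
    (hderiv x t).unique <| (hasDerivAt_const t 0).congr_of_eventuallyEq <|
      Filter.eventuallyEq_of_mem hI (hzero x hx)
  rw [← setIntegral_eq_integral_of_forall_compl_eq_zero deriv_eq_zero]
  refine (hasDerivAt_setIntegral_of_isCompact hK hF hF' hderiv).congr_of_eventuallyEq ?_
  filter_upwards [hI] with τ hτ
  exact (setIntegral_eq_integral_of_forall_compl_eq_zero fun x hx => hzero x hx τ hτ).symm

end ParametricIntegral

section CompletedSquares

theorem carleman_coercivity {κ α β μ : ℝ} (hκ : κ ∈ Icc 0 1) (hκβ : κ * α ^ 2 ≤ β)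
    (hμ : μ ∈ Icc 0 (4 * α)) (f w q : ℝ) :
    κ * (w ^ 2 + q ^ 2) - μ * (f * q) + β * f ^ 2 ≤
      5 * ((w + α * f) ^ 2 + (q - α * f) ^ 2 + β * f ^ 2) := by
  have young (p : ℝ) : κ * p ^ 2 ≤ 2 * (p + α * f) ^ 2 + 2 * (β * f ^ 2) := by
    calc κ * p ^ 2 ≤ κ * (2 * (p + α * f) ^ 2 + 2 * (α * f) ^ 2) :=
          mul_le_mul_of_nonneg_left (by linarith [sq_nonneg (p + 2 * (α * f))]) hκ.1
      _ = 2 * (κ * (p + α * f) ^ 2) + 2 * (κ * α ^ 2 * f ^ 2) := by ring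
      _ ≤ 2 * (1 * (p + α * f) ^ 2) + 2 * (β * f ^ 2) := by gcongr; exact hκ.2
      _ = _ := by ring
  have cross : -(μ * (f * q)) ≤ (q - α * f) ^ 2 := by
    have square_add : 0 ≤ (q - α * f + μ * f / 2) ^ 2 + μ * (4 * α - μ) * (f / 2) ^ 2 :=
      add_nonneg (sq_nonneg _) <|
        mul_nonneg (mul_nonneg hμ.1 (sub_nonneg.2 hμ.2)) (sq_nonneg _)
    linarith
  linarith [young w, young (-q), sq_nonneg (w + α * f), sq_nonneg (q - α * f)]

variable {X : Type*} [MeasurableSpace X] {ν : Measure X} {f w q : X → ℝ}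

theorem integral_completed_squares (hf : MemLp f 2 ν) (hw : MemLp w 2 ν) (hq : MemLp q 2 ν)
    (α β : ℝ) :
    ∫ x, ((w x + α * f x) ^ 2 + (q x - α * f x) ^ 2 + β * f x ^ 2) ∂ν =
      ∫ x, (w x + q x) ^ 2 ∂ν - 2 * ∫ x, w x * q x ∂ν + 2 * α * ∫ x, f x * w x ∂ν
        - 2 * α * ∫ x, f x * q x ∂ν + (2 * α ^ 2 + β) * ∫ x, f x ^ 2 ∂ν := by
  have hwq : Integrable (fun x => w x * q x) ν := hw.integrable_mul hq
  have hfw : Integrable (fun x => f x * w x) ν := hf.integrable_mul hw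
  have hfq : Integrable (fun x => f x * q x) ν := hf.integrable_mul hq
  have hff : Integrable (fun x => f x ^ 2) ν := hf.integrable_sq
  have hsum : Integrable (fun x => (w x + q x) ^ 2) ν := (hw.add hq).integrable_sq
  simp only [← integral_const_mul]
  rw [← integral_sub (by fun_prop) (by fun_prop), ← integral_add (by fun_prop) (by fun_prop),
    ← integral_sub (by fun_prop) (by fun_prop), ← integral_add (by fun_prop) (by fun_prop)]
  congr with x
  ring

theorem integral_carleman_coercivity {κ α β μ : ℝ} (hκ : κ ∈ Icc 0 1) (hκβ : κ * α ^ 2 ≤ β)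
    (hμ : μ ∈ Icc 0 (4 * α)) {g : X → ℝ} (hf : MemLp f 2 ν) (hw : MemLp w 2 ν) (hq : MemLp q 2 ν)
    (hg : Integrable g ν) (hgq : ∫ x, g x ∂ν = -∫ x, f x * q x ∂ν) :
    ∫ x, (κ * (w x ^ 2 + q x ^ 2) + μ * g x + β * f x ^ 2) ∂ν ≤
      5 * ∫ x, ((w x + α * f x) ^ 2 + (q x - α * f x) ^ 2 + β * f x ^ 2) ∂ν := by
  have hw2 := hw.integrable_sq
  have hq2 := hq.integrable_sq
  have hf2 := hf.integrable_sq
  have hfq : Integrable (fun x => f x * q x) ν := hf.integrable_mul hq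
  have hsum : Integrable (fun x => (w x + α * f x) ^ 2) ν :=
    (hw.add (hf.const_mul α)).integrable_sq
  have hdiff : Integrable (fun x => (q x - α * f x) ^ 2) ν :=
    (hq.sub (hf.const_mul α)).integrable_sq
  have hgreen : ∫ x, (g x + f x * q x) ∂ν = 0 := by
    rw [integral_add hg hfq, hgq, neg_add_cancel]
  calc ∫ x, (κ * (w x ^ 2 + q x ^ 2) + μ * g x + β * f x ^ 2) ∂ν
      = ∫ x, ((κ * (w x ^ 2 + q x ^ 2) - μ * (f x * q x) + β * f x ^ 2)
          + μ * (g x + f x * q x)) ∂ν := by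
        congr with x
        ring
    _ = ∫ x, (κ * (w x ^ 2 + q x ^ 2) - μ * (f x * q x) + β * f x ^ 2) ∂ν := by
        rw [integral_add (by fun_prop) (by fun_prop), integral_const_mul, hgreen, mul_zero,
          add_zero]
    _ ≤ ∫ x, 5 * ((w x + α * f x) ^ 2 + (q x - α * f x) ^ 2 + β * f x ^ 2) ∂ν :=
        integral_mono (by fun_prop) (by fun_prop) fun x =>
          carleman_coercivity hκ hκβ hμ (f x) (w x) (q x)
    _ = _ := integral_const_mul _ _

end CompletedSquares

variable {d : ℕ}

section Derivatives

variable {u : (Fin d → ℝ) → ℝ → ℝ} {x : Fin d → ℝ} {t : ℝ}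

theorem spd_eq_fderiv_uncurry (hu : DifferentiableAt ℝ (uncurry u) (x, t)) (i : Fin d) :
    spd i (u · t) x = fderiv ℝ (uncurry u) (x, t) (Pi.single i 1, 0) := by
  have h := HasFDerivAt.comp (f := (·, t)) x hu.hasFDerivAt (hasFDerivAt_prodMk_left x t)
  exact congr($(h.fderiv) (Pi.single i 1))

theorem tder_eq_fderiv_uncurry (hu : DifferentiableAt ℝ (uncurry u) (x, t)) :
    tder u x t = fderiv ℝ (uncurry u) (x, t) (0, 1) :=
  (hu.hasFDerivAt.comp_hasDerivAt t ((hasDerivAt_const t x).prodMk (hasDerivAt_id t))).deriv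

theorem hasDerivAt_tder (hu : DifferentiableAt ℝ (uncurry u) (x, t)) :
    HasDerivAt (u x) (tder u x t) t :=
  (hu.comp t ((differentiableAt_const x).prodMk differentiableAt_id)).hasDerivAt

theorem uncurry_spd (hu : Differentiable ℝ (uncurry u)) (i : Fin d) :
    uncurry (fun x t => spd i (u · t) x) = fun p => fderiv ℝ (uncurry u) p (Pi.single i 1, 0) :=
  funext fun p => spd_eq_fderiv_uncurry (hu p) i

theorem uncurry_tder (hu : Differentiable ℝ (uncurry u)) :
    uncurry (tder u) = fun p => fderiv ℝ (uncurry u) p (0, 1) :=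
  funext fun p => tder_eq_fderiv_uncurry (hu p)

theorem contDiff_spd {m n : WithTop ℕ∞} (hu : ContDiff ℝ n (uncurry u)) (hmn : m + 1 ≤ n)
    (i : Fin d) : ContDiff ℝ m (uncurry fun x t => spd i (u · t) x) := by
  rw [uncurry_spd (hu.differentiable (by rintro rfl; simp at hmn))]
  exact (hu.fderiv_right hmn).clm_apply contDiff_const

theorem contDiff_tder {m n : WithTop ℕ∞} (hu : ContDiff ℝ n (uncurry u)) (hmn : m + 1 ≤ n) :
    ContDiff ℝ m (uncurry (tder u)) := by
  rw [uncurry_tder (hu.differentiable (by rintro rfl; simp at hmn))]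
  exact (hu.fderiv_right hmn).clm_apply contDiff_const

theorem tder_spd (hu : ContDiff ℝ 2 (uncurry u)) (i : Fin d) :
    tder (fun x t => spd i (u · t) x) x t = spd i (tder u · t) x := by
  have hdiff : Differentiable ℝ (uncurry u) := hu.differentiable two_ne_zero
  have hdiff' : DifferentiableAt ℝ (fderiv ℝ (uncurry u)) (x, t) :=
    (hu.fderiv_right one_add_one_eq_two.le).differentiable one_ne_zero _
  have hspd := (contDiff_spd hu one_add_one_eq_two.le i).differentiable one_ne_zero (x, t)
  have htder := (contDiff_tder hu one_add_one_eq_two.le).differentiable one_ne_zero (x, t)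
  have hsymm := hu.contDiffAt.isSymmSndFDerivAt (x := (x, t)) (by simp)
  rw [tder_eq_fderiv_uncurry hspd, spd_eq_fderiv_uncurry htder, uncurry_spd hdiff,
    uncurry_tder hdiff, fderiv_clm_apply hdiff' (by fun_prop),
    fderiv_clm_apply hdiff' (by fun_prop)]
  simpa using hsymm (0, 1) (Pi.single i 1, 0)

theorem continuous_tder (hu : ContDiff ℝ 1 (uncurry u)) : Continuous (uncurry (tder u)) :=
  (contDiff_tder hu (zero_add 1).le).continuous

theorem continuous_grad2 (hu : ContDiff ℝ 1 (uncurry u)) : Continuous (uncurry (grad2 u)) :=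
  continuous_finsetSum Finset.univ fun i _ =>
    (contDiff_spd hu (zero_add 1).le i).continuous.fun_pow 2

theorem continuous_lap (hu : ContDiff ℝ 2 (uncurry u)) : Continuous (uncurry (lap u)) :=
  continuous_finsetSum Finset.univ fun i _ =>
    (contDiff_spd (contDiff_spd hu one_add_one_eq_two.le i) (zero_add 1).le i).continuous

theorem hasDerivAt_grad2 (hu : ContDiff ℝ 2 (uncurry u)) :
    HasDerivAt (grad2 u x) (2 * ∑ i, spd i (tder u · t) x * spd i (u · t) x) t := by
  have hspd (i : Fin d) :
      HasDerivAt (fun τ => spd i (u · τ) x) (spd i (tder u · t) x) t := by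
    rw [← tder_spd hu]
    exact hasDerivAt_tder ((contDiff_spd hu one_add_one_eq_two.le i).differentiable one_ne_zero _)
  refine (HasDerivAt.fun_sum fun i _ => (hspd i).fun_pow 2).congr_deriv ?_
  rw [Finset.mul_sum]
  exact Finset.sum_congr rfl fun i _ => by ring

end Derivatives

section Support

variable {u : (Fin d → ℝ) → ℝ → ℝ} {K : Set (Fin d → ℝ)} {x : Fin d → ℝ} {t : ℝ}

theorem spd_eq_zero_of_notMem {f : (Fin d → ℝ) → ℝ} (hK : IsClosed K) (hf : ∀ y ∉ K, f y = 0)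
    (hx : x ∉ K) (i : Fin d) : spd i f x = 0 := by
  have hsupp : tsupport f ⊆ K := closure_minimal (Function.support_subset_iff'.2 hf) hK
  rw [spd, fderiv_of_notMem_tsupport ℝ fun h => hx (hsupp h), zero_apply]

theorem grad2_eq_zero_of_notMem (hK : IsClosed K) (hu : ∀ y ∉ K, u y t = 0) (hx : x ∉ K) :
    grad2 u x t = 0 :=
  Finset.sum_eq_zero fun i _ => by rw [spd_eq_zero_of_notMem hK hu hx, zero_pow two_ne_zero]

theorem lap_eq_zero_of_notMem (hK : IsClosed K) (hu : ∀ y ∉ K, u y t = 0) (hx : x ∉ K) :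
    lap u x t = 0 :=
  Finset.sum_eq_zero fun i _ =>
    spd_eq_zero_of_notMem hK (fun _ hy => spd_eq_zero_of_notMem hK hu hy i) hx i

theorem tder_eq_zero_of_eqOn {I : Set ℝ} (hI : UniqueDiffWithinAt ℝ I t) (ht : t ∈ I)
    (hdiff : DifferentiableAt ℝ (uncurry u) (x, t)) (hu : ∀ τ ∈ I, u x τ = 0) :
    tder u x t = 0 := by
  have h := (hasDerivAt_tder hdiff).hasDerivWithinAt (s := I)
  exact hI.eq_deriv _ h ((hasDerivWithinAt_const t I 0).congr hu (hu t ht))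

end Support

section Green

variable {f h : (Fin d → ℝ) → ℝ}

theorem continuous_spd (hf : ContDiff ℝ 1 f) (i : Fin d) : Continuous (spd i f) :=
  (hf.continuous_fderiv one_ne_zero).clm_apply continuous_const

theorem integral_spd_mul_eq_neg (hf : ContDiff ℝ 1 f) (hh : ContDiff ℝ 1 h)
    (hsupp : HasCompactSupport h) (i : Fin d) :
    ∫ x, spd i h x * f x = -∫ x, h x * spd i f x := by
  have hsupp' : HasCompactSupport (spd i h) := hsupp.fderiv_apply ℝ _
  refine neg_eq_iff_eq_neg.1 (integral_mul_fderiv_eq_neg_fderiv_mul_of_integrable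
    (((continuous_spd hh i).mul hf.continuous).integrable_of_hasCompactSupport hsupp'.mul_right)
    ((hh.continuous.mul (continuous_spd hf i)).integrable_of_hasCompactSupport hsupp.mul_right)
    ((hh.continuous.mul hf.continuous).integrable_of_hasCompactSupport hsupp.mul_right)
    (fun x _ => hh.differentiable one_ne_zero x) fun x _ => hf.differentiable one_ne_zero x).symm

theorem integral_sum_spd_mul_spd (hf : ContDiff ℝ 2 f) (hh : ContDiff ℝ 1 h)
    (hsupp : HasCompactSupport h) :
    ∫ x, ∑ i, spd i h x * spd i f x = -∫ x, h x * ∑ i, spd i (spd i f) x := by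
  have hspd (i : Fin d) : ContDiff ℝ 1 (spd i f) :=
    (hf.fderiv_right one_add_one_eq_two.le).clm_apply contDiff_const
  have integrable_left (i : Fin d) : Integrable fun x => spd i h x * spd i f x :=
    ((continuous_spd hh i).mul (hspd i).continuous).integrable_of_hasCompactSupport
      (HasCompactSupport.mul_right (hsupp.fderiv_apply ℝ _))
  have integrable_right (i : Fin d) : Integrable fun x => h x * spd i (spd i f) x :=
    (hh.continuous.mul (continuous_spd (hspd i) i)).integrable_of_hasCompactSupport hsupp.mul_right
  simp only [Finset.mul_sum]
  rw [integral_finsetSum _ fun i _ => integrable_left i,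
    integral_finsetSum _ fun i _ => integrable_right i, ← Finset.sum_neg_distrib]
  exact Finset.sum_congr rfl fun i _ => integral_spd_mul_eq_neg (hspd i) hh hsupp i

end Green

section Slices

variable {u : (Fin d → ℝ) → ℝ → ℝ} {K : Set (Fin d → ℝ)} {I : Set ℝ} {t : ℝ}

theorem hasDerivAt_integral_sq (hu : ContDiff ℝ 1 (uncurry u)) (hK : IsCompact K) (hI : I ∈ 𝓝 t)
    (hzero : ∀ x ∉ K, ∀ τ ∈ I, u x τ = 0) :
    HasDerivAt (fun t => ∫ x, u x t ^ 2) (2 * ∫ x, u x t * tder u x t) t := by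
  have hu0 : Continuous (uncurry u) := hu.continuous
  have ht := continuous_tder hu
  rw [← integral_const_mul]
  refine hasDerivAt_integral_of_eq_zero_of_notMem hK (F' := fun x t => 2 * (u x t * tder u x t))
    (by fun_prop) (by fun_prop) (fun x τ => ?_) hI fun x hx τ hτ => ?_
  · exact ((hasDerivAt_tder (hu.differentiable one_ne_zero _)).fun_pow 2).congr_deriv (by ring)
  · rw [hzero x hx τ hτ, zero_pow two_ne_zero]

theorem hasDerivAt_integral_grad2 (hu : ContDiff ℝ 2 (uncurry u)) (hK : IsCompact K) (hI : I ∈ 𝓝 t)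
    (hzero : ∀ x ∉ K, ∀ τ ∈ I, u x τ = 0) :
    HasDerivAt (fun t => ∫ x, grad2 u x t) (-(2 * ∫ x, tder u x t * lap u x t)) t := by
  have hu1 := hu.of_le one_le_two
  have ht := contDiff_tder hu one_add_one_eq_two.le
  have tder_slice : ContDiff ℝ 1 (tder u · t) := ht.comp (contDiff_prodMk_left t)
  have tder_supp : HasCompactSupport (tder u · t) := .intro hK fun x hx =>
    tder_eq_zero_of_eqOn (uniqueDiffWithinAt_of_mem_nhds hI) (mem_of_mem_nhds hI)
      (hu.differentiable two_ne_zero _) (hzero x hx)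
  have hgreen := integral_sum_spd_mul_spd (hu.comp (contDiff_prodMk_left t)) tder_slice tder_supp
  have hmixed := hasDerivAt_integral_of_eq_zero_of_notMem (μ := volume) hK
    (F' := fun x t => 2 * ∑ i, spd i (tder u · t) x * spd i (u · t) x) (continuous_grad2 hu1)
    (continuous_const.fun_mul <| continuous_finsetSum Finset.univ fun i _ =>
      (contDiff_spd ht (zero_add 1).le i).continuous.fun_mul
        (contDiff_spd hu1 (zero_add 1).le i).continuous)
    (fun x τ => hasDerivAt_grad2 hu) hI fun x hx τ hτ =>
      grad2_eq_zero_of_notMem hK.isClosed (fun y hy => hzero y hy τ hτ) hx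
  refine hmixed.congr_deriv ?_
  rw [integral_const_mul, ← mul_neg]
  exact congrArg (2 * ·) hgreen

theorem integrable_grad2 (hu : ContDiff ℝ 1 (uncurry u)) (hK : IsCompact K)
    (hzero : ∀ x ∉ K, u x t = 0) : Integrable (grad2 u · t) :=
  ((continuous_grad2 hu).comp (.prodMk_left t)).integrable_of_hasCompactSupport <|
    .intro hK fun _ => grad2_eq_zero_of_notMem hK.isClosed hzero

theorem integral_grad2 (hu : ContDiff ℝ 2 (u · t)) (hsupp : HasCompactSupport (u · t)) :
    ∫ x, grad2 u x t = -∫ x, u x t * lap u x t := by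
  simp only [grad2, sq]
  exact integral_sum_spd_mul_spd hu (hu.of_le one_le_two) hsupp

theorem memLp_two_of_eq_zero_of_notMem {F : (Fin d → ℝ) → ℝ → ℝ} (hF : Continuous (uncurry F))
    (hK : IsCompact K) (hzero : ∀ x ∉ K, F x t = 0) : MemLp (F · t) 2 :=
  (hF.comp (.prodMk_left t)).memLp_of_hasCompactSupport (.intro hK hzero)

end Slices

section Energy

variable {u : (Fin d → ℝ) → ℝ → ℝ} {K : Set (Fin d → ℝ)} {I : Set ℝ} {t : ℝ}
  {ψ ψ' ψ'' : ℝ → ℝ}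

/-- The energy `⟪-A v, v⟫ = ∫ (|∇u|² + ψ' u²) e^{2ψ} dx` at time `t` of the conjugated function
`v = e^ψ u`, where `A = Δ - ψ'` and the argument `ψ'` stands for the derivative of `ψ`. -/
noncomputable def carlemanEnergy (ψ ψ' : ℝ → ℝ) (u : (Fin d → ℝ) → ℝ → ℝ) (t : ℝ) : ℝ :=
  ∫ x, (ψ' t * u x t ^ 2 + grad2 u x t) * exp (2 * ψ t)

/-- The sum `‖∂_t v‖² + ‖A v‖² + ψ'' ‖v‖²` at time `t`, with `v` and `A` as in `carlemanEnergy` and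
the arguments `ψ'`, `ψ''` standing for the derivatives of `ψ`. -/
noncomputable def carlemanSquares (ψ ψ' ψ'' : ℝ → ℝ) (u : (Fin d → ℝ) → ℝ → ℝ) (t : ℝ) : ℝ :=
  ∫ x, ((tder u x t + ψ' t * u x t) ^ 2 + (lap u x t - ψ' t * u x t) ^ 2 + ψ'' t * u x t ^ 2)
    * exp (2 * ψ t)

theorem carlemanEnergy_eq (hu : ContDiff ℝ 1 (uncurry u)) (hK : IsCompact K)
    (hzero : ∀ x ∉ K, u x t = 0) :
    carlemanEnergy ψ ψ' u t =
      (ψ' t * (∫ x, u x t ^ 2) + ∫ x, grad2 u x t) * exp (2 * ψ t) := by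
  have hsq := (memLp_two_of_eq_zero_of_notMem hu.continuous hK hzero).integrable_sq
  rw [carlemanEnergy, integral_mul_const, integral_add (hsq.const_mul _)
    (integrable_grad2 hu hK hzero), integral_const_mul]

theorem hasDerivAt_carlemanEnergy (hψ : HasDerivAt ψ (ψ' t) t) (hψ' : HasDerivAt ψ' (ψ'' t) t)
    (hu : ContDiff ℝ 2 (uncurry u)) (hK : IsCompact K) (hI : I ∈ 𝓝 t)
    (hzero : ∀ x ∉ K, ∀ τ ∈ I, u x τ = 0) :
    HasDerivAt (carlemanEnergy ψ ψ' u)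
      (carlemanSquares ψ ψ' ψ'' u t - ∫ x, (tder u x t + lap u x t) ^ 2 * exp (2 * ψ t)) t := by
  have hu1 := hu.of_le one_le_two
  have hzero_t : ∀ x ∉ K, u x t = 0 := fun x hx => hzero x hx t (mem_of_mem_nhds hI)
  have hu_L2 := memLp_two_of_eq_zero_of_notMem hu.continuous hK hzero_t
  have tder_L2 := memLp_two_of_eq_zero_of_notMem (continuous_tder hu1) hK fun x hx =>
    tder_eq_zero_of_eqOn (uniqueDiffWithinAt_of_mem_nhds hI) (mem_of_mem_nhds hI)
      (hu.differentiable two_ne_zero (x, t)) (hzero x hx)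
  have lap_L2 := memLp_two_of_eq_zero_of_notMem (continuous_lap hu) hK fun _ =>
    lap_eq_zero_of_notMem hK.isClosed hzero_t
  have hgreen := integral_grad2 (t := t) (hu.comp (contDiff_prodMk_left t)) (.intro hK hzero_t)
  have energy_eq : carlemanEnergy ψ ψ' u =ᶠ[𝓝 t]
      fun τ => (ψ' τ * (∫ x, u x τ ^ 2) + ∫ x, grad2 u x τ) * exp (2 * ψ τ) := by
    filter_upwards [hI] with τ hτ
    exact carlemanEnergy_eq hu1 hK fun x hx => hzero x hx τ hτ
  have hderiv := ((hψ'.fun_mul (hasDerivAt_integral_sq hu1 hK hI hzero)).fun_add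
    (hasDerivAt_integral_grad2 hu hK hI hzero)).fun_mul (hψ.const_mul 2).exp
  refine (hderiv.congr_of_eventuallyEq energy_eq).congr_deriv ?_
  rw [carlemanSquares, integral_mul_const, integral_mul_const,
    integral_completed_squares hu_L2 tder_L2 lap_L2, hgreen]
  ring

theorem carlemanEnergy_nonneg (hψ' : 0 ≤ ψ' t) : 0 ≤ carlemanEnergy ψ ψ' u t :=
  integral_nonneg fun _ =>
    mul_nonneg (add_nonneg (mul_nonneg hψ' (sq_nonneg _))
      (Finset.sum_nonneg fun _ _ => sq_nonneg _)) (exp_nonneg _)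

theorem continuousOn_carlemanEnergy (hψ : Continuous ψ) (hψ' : Continuous ψ')
    (hu : ContDiff ℝ 1 (uncurry u)) (hK : IsCompact K) (hzero : ∀ x ∉ K, ∀ τ ∈ I, u x τ = 0) :
    ContinuousOn (carlemanEnergy ψ ψ' u) I := by
  have hu0 : Continuous (uncurry u) := hu.continuous
  have hgrad := continuous_grad2 hu
  refine continuousOn_integral_of_eq_zero_of_notMem hK (by fun_prop) fun x hx τ hτ => ?_
  rw [hzero x hx τ hτ, grad2_eq_zero_of_notMem hK.isClosed (fun y hy => hzero y hy τ hτ) hx]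
  ring

theorem integral_le_carlemanSquares {κ μ : ℝ} (hκ : κ ∈ Icc 0 1) (hκψ : κ * ψ' t ^ 2 ≤ ψ'' t)
    (hμ : μ ∈ Icc 0 (4 * ψ' t)) (hu : ContDiff ℝ 2 (uncurry u)) (hK : IsCompact K)
    (hzero : ∀ x ∉ K, u x t = 0) (htder : ∀ x ∉ K, tder u x t = 0) :
    ∫ x, (κ * (tder u x t ^ 2 + lap u x t ^ 2) + μ * grad2 u x t + ψ'' t * u x t ^ 2)
        * exp (2 * ψ t) ≤ 5 * carlemanSquares ψ ψ' ψ'' u t := by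
  have hu1 := hu.of_le one_le_two
  rw [carlemanSquares, integral_mul_const, integral_mul_const, ← mul_assoc]
  refine mul_le_mul_of_nonneg_right ?_ (exp_nonneg _)
  exact integral_carleman_coercivity hκ hκψ hμ
    (memLp_two_of_eq_zero_of_notMem hu.continuous hK hzero)
    (memLp_two_of_eq_zero_of_notMem (continuous_tder hu1) hK htder)
    (memLp_two_of_eq_zero_of_notMem (continuous_lap hu) hK fun _ =>
      lap_eq_zero_of_notMem hK.isClosed hzero)
    (integrable_grad2 hu1 hK hzero)
    (integral_grad2 (hu.comp (contDiff_prodMk_left t)) (.intro hK hzero))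

end Energy

section Carleman

variable {u : (Fin d → ℝ) → ℝ → ℝ} {K : Set (Fin d → ℝ)} {I : Set ℝ} {ψ ψ' ψ'' κ μ : ℝ → ℝ}

theorem continuousOn_integral_residual (hψ : Continuous ψ) (hu : ContDiff ℝ 2 (uncurry u))
    (hK : IsCompact K) (hI : UniqueDiffOn ℝ I) (hzero : ∀ x ∉ K, ∀ t ∈ I, u x t = 0) :
    ContinuousOn (fun t => ∫ x, (tder u x t + lap u x t) ^ 2 * exp (2 * ψ t)) I := by
  have tder_cont := continuous_tder (hu.of_le one_le_two)
  have lap_cont := continuous_lap hu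
  refine continuousOn_integral_of_eq_zero_of_notMem hK (by fun_prop) fun x hx t ht => ?_
  rw [tder_eq_zero_of_eqOn (hI t ht) ht (hu.differentiable two_ne_zero _) (hzero x hx),
    lap_eq_zero_of_notMem hK.isClosed (fun y hy => hzero y hy t ht) hx]
  ring

theorem continuousOn_integral_weighted_norms (hψ : Continuous ψ) (hψ'' : Continuous ψ'')
    (hκ : Continuous κ) (hμ : Continuous μ) (hu : ContDiff ℝ 2 (uncurry u)) (hK : IsCompact K)
    (hI : UniqueDiffOn ℝ I) (hzero : ∀ x ∉ K, ∀ t ∈ I, u x t = 0) :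
    ContinuousOn (fun t => ∫ x, (κ t * (tder u x t ^ 2 + lap u x t ^ 2) + μ t * grad2 u x t
      + ψ'' t * u x t ^ 2) * exp (2 * ψ t)) I := by
  have u_cont : Continuous (uncurry u) := hu.continuous
  have tder_cont := continuous_tder (hu.of_le one_le_two)
  have grad_cont := continuous_grad2 (hu.of_le one_le_two)
  have lap_cont := continuous_lap hu
  refine continuousOn_integral_of_eq_zero_of_notMem hK (by fun_prop) fun x hx t ht => ?_
  have hzero_t : ∀ y ∉ K, u y t = 0 := fun y hy => hzero y hy t ht
  rw [tder_eq_zero_of_eqOn (hI t ht) ht (hu.differentiable two_ne_zero _) (hzero x hx),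
    lap_eq_zero_of_notMem hK.isClosed hzero_t hx, grad2_eq_zero_of_notMem hK.isClosed hzero_t hx,
    hzero_t x hx]
  ring

theorem carleman_of_weight {a b : ℝ} (hab : a < b)
    (hψ : ∀ t, HasDerivAt ψ (ψ' t) t) (hψ' : ∀ t, HasDerivAt ψ' (ψ'' t) t)
    (hψ'' : Continuous ψ'') (hκ : Continuous κ) (hμ : Continuous μ)
    (hκ_mem : ∀ t ∈ Icc a b, κ t ∈ Icc 0 1) (hκψ : ∀ t ∈ Icc a b, κ t * ψ' t ^ 2 ≤ ψ'' t)
    (hμ_mem : ∀ t ∈ Icc a b, μ t ∈ Icc 0 (4 * ψ' t)) (hu : ContDiff ℝ 2 (uncurry u))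
    (hK : IsCompact K) (hzero : ∀ x ∉ K, ∀ t ∈ Icc a b, u x t = 0) :
    (∫ t in Ioo a b, ∫ x, (κ t * (tder u x t ^ 2 + lap u x t ^ 2) + μ t * grad2 u x t
        + ψ'' t * u x t ^ 2) * exp (2 * ψ t)) + carlemanEnergy ψ ψ' u a ≤
      5 * (∫ t in Ioo a b, ∫ x, (tder u x t + lap u x t) ^ 2 * exp (2 * ψ t))
        + 5 * carlemanEnergy ψ ψ' u b := by
  have hψ0 : Continuous ψ := continuous_iff_continuousAt.2 fun t => (hψ t).continuousAt
  have hψ1 : Continuous ψ' := continuous_iff_continuousAt.2 fun t => (hψ' t).continuousAt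
  have hI := uniqueDiffOn_Icc hab
  have norms_cont := continuousOn_integral_weighted_norms hψ0 hψ'' hκ hμ hu hK hI hzero
  have residual_cont := continuousOn_integral_residual hψ0 hu hK hI hzero
  have energy_cont := continuousOn_carlemanEnergy hψ0 hψ1 (hu.of_le one_le_two) hK hzero
  have norms_le (t : ℝ) (ht : t ∈ Icc a b) :=
    integral_le_carlemanSquares (ψ := ψ) (hκ_mem t ht) (hκψ t ht) (hμ_mem t ht) hu hK
      (fun x hx => hzero x hx t ht) fun x hx =>
        tder_eq_zero_of_eqOn (hI t ht) ht (hu.differentiable two_ne_zero _) (hzero x hx)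
  have integrated := intervalIntegral.integral_le_sub_of_hasDeriv_right_of_le hab.le
    (energy_cont.const_mul 5)
    (fun t ht => ((hasDerivAt_carlemanEnergy (hψ t) (hψ' t) hu hK (Icc_mem_nhds ht.1 ht.2)
      hzero).const_mul 5).hasDerivWithinAt)
    (norms_cont.fun_sub (residual_cont.const_mul 5)).integrableOn_Icc fun t ht => by
      linarith [norms_le t (Ioo_subset_Icc_self ht)]
  rw [intervalIntegral.integral_sub (norms_cont.intervalIntegrable_of_Icc hab.le)
    ((residual_cont.const_mul 5).intervalIntegrable_of_Icc hab.le),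
    intervalIntegral.integral_const_mul] at integrated
  simp only [intervalIntegral.integral_of_le hab.le, integral_Ioc_eq_integral_Ioo] at integrated
  have hμa := hμ_mem a (left_mem_Icc.2 hab.le)
  have energy_nonneg : 0 ≤ carlemanEnergy ψ ψ' u a :=
    carlemanEnergy_nonneg (by linarith [hμa.1, hμa.2])
  linarith

theorem carleman_backward_heat_general {T s lam : ℝ} (hT : 0 < T) (hs : 1 ≤ s) (hlam : 0 ≤ lam)
    (hu : ContDiff ℝ 2 (uncurry u)) (hK : IsCompact K)
    (hzero : ∀ x ∉ K, ∀ t ∈ Icc 0 T, u x t = 0) :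
    (∫ t in Ioo 0 T, ∫ x,
        ((1 / (s * exp (lam * t))) * (tder u x t ^ 2 + lap u x t ^ 2) + lam * grad2 u x t
          + s * lam ^ 2 * exp (lam * t) * u x t ^ 2) * exp (2 * s * exp (lam * t)))
      + (∫ x, (s * lam * u x 0 ^ 2 + grad2 u x 0) * exp (2 * s))
    ≤ 5 * (∫ t in Ioo 0 T, ∫ x, (tder u x t + lap u x t) ^ 2 * exp (2 * s * exp (lam * t)))
      + 5 * (∫ x, (s * lam * exp (lam * T) * u x T ^ 2 + grad2 u x T)
          * exp (2 * s * exp (lam * T))) := by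
  have hexp (t : ℝ) : HasDerivAt (fun t => exp (lam * t)) (lam * exp (lam * t)) t :=
    ((hasDerivAt_id t).const_mul lam).exp.congr_deriv (by simp [mul_comm])
  have hψ (t : ℝ) : HasDerivAt (fun t => s * exp (lam * t)) (s * lam * exp (lam * t)) t :=
    ((hexp t).const_mul s).congr_deriv (by ring)
  have hψ' (t : ℝ) :
      HasDerivAt (fun t => s * lam * exp (lam * t)) (s * lam ^ 2 * exp (lam * t)) t :=
    ((hexp t).const_mul (s * lam)).congr_deriv (by ring)
  have hs0 : 0 < s := one_pos.trans_le hs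
  have hφ0 (t : ℝ) : 0 < s * exp (lam * t) := mul_pos hs0 (exp_pos _)
  have hφ1 : ∀ t ∈ Icc 0 T, 1 ≤ s * exp (lam * t) := fun t ht =>
    one_le_mul_of_one_le_of_one_le hs (one_le_exp (mul_nonneg hlam ht.1))
  have hκ : Continuous fun t => 1 / (s * exp (lam * t)) :=
    continuous_const.div (by fun_prop) fun t => (hφ0 t).ne'
  have estimate := carleman_of_weight hT hψ hψ' (by fun_prop) hκ (continuous_const (y := lam))
    (fun t ht => ⟨(one_div_pos.2 (hφ0 t)).le, (div_le_one (hφ0 t)).2 (hφ1 t ht)⟩)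
    (fun t _ => by field_simp; rfl)
    (fun t ht => ⟨hlam, by linarith [mul_le_mul_of_nonneg_left (hφ1 t ht) hlam]⟩) hu hK hzero
  simpa only [carlemanEnergy, mul_zero, exp_zero, mul_one, ← mul_assoc] using estimate

end Carleman

/-- Carleman estimate (4.4) with two large parameters for the backward heat
operator `∂_t + Δ`, with weight `φ(t) = e^{λt}`. -/
theorem carleman_backward_heat
    (d : ℕ) (hd : 1 ≤ d) (T : ℝ) (hT : 0 < T) :
    ∃ C > (0:ℝ), ∃ s₁ ≥ (1:ℝ), ∀ s ≥ s₁, ∀ lam ≥ s₁,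
      ∀ u : (Fin d → ℝ) → ℝ → ℝ, Admissible T u →
      (∫ t in Set.Ioo (0:ℝ) T, ∫ x : Fin d → ℝ,
          ((1 / (s * Real.exp (lam * t))) * ((tder u x t) ^ 2 + (lap u x t) ^ 2)
            + lam * grad2 u x t
            + s * lam ^ 2 * Real.exp (lam * t) * (u x t) ^ 2)
          * Real.exp (2 * s * Real.exp (lam * t)))
      + (∫ x : Fin d → ℝ,
          (s * lam * (u x 0) ^ 2 + grad2 u x 0) * Real.exp (2 * s))
      ≤ C * (∫ t in Set.Ioo (0:ℝ) T, ∫ x : Fin d → ℝ,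
            (tder u x t + lap u x t) ^ 2 * Real.exp (2 * s * Real.exp (lam * t)))
        + C * (∫ x : Fin d → ℝ,
            (s * lam * Real.exp (lam * T) * (u x T) ^ 2 + grad2 u x T)
              * Real.exp (2 * s * Real.exp (lam * T))) := by
  exact ⟨5, by norm_num, 1, le_rfl, fun s hs lam hlam u ⟨hu, K, hK, hzero⟩ =>
    carleman_backward_heat_general hT hs (zero_le_one.trans hlam) (contDiff_infty.1 hu 2) hK
      fun x hx t => hzero x t hx⟩
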